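/- Let 𝒮 = (1/√2)·[[1,1],[1,-1]] and 𝒯 = diag(e^{2πi·23/24}, e^{2πi·5/24}). Then the assignments S ↦ 𝒮 and T ↦ 𝒯 extend to a group homomorphism ρ_A : SL₂(ℤ) → GL₂(ℂ); that is, 𝒮⁴ = 1 and (𝒮𝒯)³ = 𝒮². -/

import Mathlib

/-!
Since `𝒮² = 1`, the relations read `𝒮² = (𝒮𝒯)³ = 1`, and the representation factors through the
free product `C₂ * C₃ ≅ PSL(2, ℤ)`. The ping-pong lemma applied to the action of `SL(2, ℤ)` on
the upper half-plane supplies this isomorphism: `S` maps `{re z < 0}` into `{re z > 0}`, while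
`ST` and `(ST)²` map `{re z > 0}` into `{re z < 0}`. Hence `C₂ * C₃` embeds in `Perm ℍ`, with
image containing that of `SL(2, ℤ)`, as `S` and `T` generate. Inverting the embedding gives
`SL(2, ℤ) →* C₂ * C₃`, and the universal property of the free product then gives the map to any
monoid in which the two relations hold (`exists_hom_of_relations`).

For the relations themselves, put `z = exp (-πi/12)`, so that `𝒯 = diag (z, i z)` and
`√2 * z ^ 3 = 1 - i`. They are then polynomial identities.
-/


open Matrix Complex MatrixGroups

/-- The generator `S` of `SL(2, ℤ)`. -/
def SmatZ : SL(2, ℤ) :=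
  ⟨!![0, -1; 1, 0], by norm_num [Matrix.det_fin_two_of]⟩

/-- The generator `T` of `SL(2, ℤ)`. -/
def TmatZ : SL(2, ℤ) :=
  ⟨!![1, 1; 0, 1], by norm_num [Matrix.det_fin_two_of]⟩

/-- The `S`-matrix of the `A₁` level 1 modular data. -/
noncomputable def calS : Matrix (Fin 2) (Fin 2) ℂ :=
  (((Real.sqrt 2)⁻¹ : ℝ) : ℂ) • !![1, 1; 1, -1]

/-- The `T`-matrix of the `A₁` level 1 modular data. -/
noncomputable def calT : Matrix (Fin 2) (Fin 2) ℂ :=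
  Matrix.diagonal ![Complex.exp (2 * Real.pi * Complex.I * (23 / 24)),
    Complex.exp (2 * Real.pi * Complex.I * (5 / 24))]

open UpperHalfPlane Monoid

/-- The homomorphism `C_n → G` that sends the generator to an element `g` with `g ^ n = 1`. -/
def cyclicHom {G : Type*} [Group G] (n : ℕ) (g : G) (hg : g ^ n = 1) :
    Multiplicative (ZMod n) →* G :=
  AddMonoidHom.toMultiplicativeLeft
    (ZMod.lift n ⟨zmultiplesHom (Additive G) (Additive.ofMul g), by
      simpa [← ofMul_pow] using hg⟩)

lemma cyclicHom_natCast {G : Type*} [Group G] (n : ℕ) (g : G) (hg : g ^ n = 1) (k : ℕ) :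
    cyclicHom n g hg (Multiplicative.ofAdd (k : ZMod n)) = g ^ k := by
  have := ZMod.lift_coe n ⟨zmultiplesHom (Additive G) (Additive.ofMul g), by
      simpa [← ofMul_pow] using hg⟩ (k : ℤ)
  simp only [Int.cast_natCast] at this
  simp [cyclicHom, this]

/-- The orders of the two free factors of `PSL(2, ℤ)`. -/
abbrev factorOrder (b : Bool) : ℕ := if b then 3 else 2

/-- The homomorphism `C₂ * C₃ → G` given by elements `s`, `u` with `s ^ 2 = 1` and `u ^ 3 = 1`. -/
def freeProdHom {G : Type*} [Group G] (s u : G) (hs : s ^ 2 = 1) (hu : u ^ 3 = 1) :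
    CoprodI (fun b : Bool => Multiplicative (ZMod (factorOrder b))) →* G :=
  CoprodI.lift fun b => cyclicHom (factorOrder b) (if b then u else s) (by cases b <;> simpa)

lemma re_S_smul (z : ℍ) : (ModularGroup.S • z).re = -z.re / Complex.normSq z := by
  rw [modular_S_smul]
  rw [← coe_re, coe_mk, Complex.inv_re, Complex.neg_re, Complex.normSq_neg, coe_re]

lemma re_T_smul (z : ℍ) : (ModularGroup.T • z).re = z.re + 1 := by
  rw [modular_T_smul, vadd_re, add_comm]

lemma re_S_smul_pos {z : ℍ} (hz : z.re < 0) : 0 < (ModularGroup.S • z).re := by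
  rw [re_S_smul]
  exact div_pos (neg_pos.2 hz) z.normSq_pos

lemma re_S_smul_neg {z : ℍ} (hz : 0 < z.re) : (ModularGroup.S • z).re < 0 := by
  rw [re_S_smul]
  exact div_neg_of_neg_of_pos (neg_lt_zero.2 hz) z.normSq_pos

lemma re_ST_smul_neg {z : ℍ} (hz : 0 < z.re) :
    ((ModularGroup.S * ModularGroup.T) • z).re < 0 := by
  rw [mul_smul]
  refine re_S_smul_neg ?_
  rw [re_T_smul]
  linarith

/-- If `re z > 0` then `w = Tz` has `re w > 1`, hence `re (Sw) > -1` and `re (TSTz) > 0`; the last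
`S` makes the real part negative. -/
lemma re_ST_sq_smul_neg {z : ℍ} (hz : 0 < z.re) :
    (((ModularGroup.S * ModularGroup.T) ^ 2) • z).re < 0 := by
  rw [pow_two, mul_smul, mul_smul]
  refine re_S_smul_neg ?_
  rw [re_T_smul, mul_smul, re_S_smul]
  have h1 : 1 < (ModularGroup.T • z).re := by rw [re_T_smul]; linarith
  generalize ModularGroup.T • z = w at h1
  have h2 : w.re < Complex.normSq w := by
    rw [Complex.normSq_apply, coe_re, coe_im]
    nlinarith [mul_self_nonneg w.im]
  have h3 := (div_lt_one w.normSq_pos).2 h2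
  rw [neg_div]
  linarith

/-- The action of `SL(2, ℤ)` on the upper half-plane, as a homomorphism. -/
noncomputable abbrev actHom : SL(2, ℤ) →* Equiv.Perm ℍ := MulAction.toPermHom SL(2, ℤ) ℍ

lemma actHom_neg_one : actHom (-1) = 1 := by
  ext1 z
  simp [MulAction.toPermHom_apply]

lemma actHom_S_sq : actHom ModularGroup.S ^ 2 = 1 := by
  rw [← map_pow, ← actHom_neg_one]
  congr 1
  exact Subtype.ext (by decide)

lemma actHom_ST_cube : actHom (ModularGroup.S * ModularGroup.T) ^ 3 = 1 := by
  rw [← map_pow, ← actHom_neg_one]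
  congr 1
  exact Subtype.ext (by decide)

/-- The homomorphism `C₂ * C₃ → Perm ℍ` given by the actions of `S` and `ST`. -/
noncomputable def freeProdAct :
    CoprodI (fun b : Bool => Multiplicative (ZMod (factorOrder b))) →* Equiv.Perm ℍ :=
  freeProdHom _ _ actHom_S_sq actHom_ST_cube

lemma freeProdAct_injective : Function.Injective freeProdAct := by
  refine CoprodI.lift_injective_of_ping_pong _ (Or.inr ⟨true, ?_⟩)
    (fun b : Bool => if b then {z : ℍ | z.re < 0} else {z : ℍ | 0 < z.re}) ?_ ?_ ?_
  · change 3 ≤ Cardinal.mk (ZMod 3)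
    simp
  · rintro (_ | _)
    · exact ⟨⟨⟨1, 1⟩, one_pos⟩, one_pos (α := ℝ)⟩
    · exact ⟨⟨⟨-1, 1⟩, one_pos⟩, neg_one_lt_zero (R := ℝ)⟩
  · rintro (_ | _) (_ | _) h
    · exact absurd rfl h
    · exact Set.disjoint_left.2 fun z (h1 : 0 < z.re) (h2 : z.re < 0) => lt_asymm h1 h2
    · exact Set.disjoint_left.2 fun z (h1 : z.re < 0) (h2 : 0 < z.re) => lt_asymm h1 h2
    · exact absurd rfl h
  · rintro (_ | _) (_ | _) h
    · exact absurd rfl h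
    · intro k hk
      obtain rfl : k = Multiplicative.ofAdd ((1 : ℕ) : ZMod 2) := by
        revert k; change ∀ k : ZMod 2, k ≠ 0 → k = 1; decide
      rintro _ ⟨z, hz, rfl⟩
      have e := cyclicHom_natCast 2 _ actHom_S_sq 1
      rw [pow_one] at e
      change 0 < ((cyclicHom 2 _ actHom_S_sq (Multiplicative.ofAdd ((1 : ℕ) : ZMod 2))) z).re
      rw [e]
      exact re_S_smul_pos hz
    · intro k hk
      have hk' : k = Multiplicative.ofAdd ((1 : ℕ) : ZMod 3) ∨
          k = Multiplicative.ofAdd ((2 : ℕ) : ZMod 3) := by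
        revert k; change ∀ k : ZMod 3, k ≠ 0 → k = 1 ∨ k = 2; decide
      rintro _ ⟨z, hz, rfl⟩
      change ((cyclicHom 3 _ actHom_ST_cube k) z).re < 0
      rcases hk' with rfl | rfl
      · rw [cyclicHom_natCast, pow_one]
        exact re_ST_smul_neg hz
      · rw [cyclicHom_natCast, ← map_pow]
        exact re_ST_sq_smul_neg hz
    · exact absurd rfl h

lemma freeProdHom_gen_two {G : Type*} [Group G] (s u : G) (hs : s ^ 2 = 1) (hu : u ^ 3 = 1) :
    freeProdHom s u hs hu (CoprodI.of (i := false) (Multiplicative.ofAdd ((1 : ℕ) : ZMod 2)))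
      = s := by
  rw [freeProdHom, CoprodI.lift_of]
  exact (cyclicHom_natCast 2 s hs 1).trans (pow_one s)

lemma freeProdHom_gen_three {G : Type*} [Group G] (s u : G) (hs : s ^ 2 = 1) (hu : u ^ 3 = 1) :
    freeProdHom s u hs hu (CoprodI.of (i := true) (Multiplicative.ofAdd ((1 : ℕ) : ZMod 3)))
      = u := by
  rw [freeProdHom, CoprodI.lift_of]
  exact (cyclicHom_natCast 3 u hu 1).trans (pow_one u)

lemma actHom_mem_range (g : SL(2, ℤ)) : actHom g ∈ freeProdAct.range := by
  have hS : actHom ModularGroup.S ∈ freeProdAct.range := ⟨_, freeProdHom_gen_two _ _ _ _⟩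
  have hST : actHom (ModularGroup.S * ModularGroup.T) ∈ freeProdAct.range :=
    ⟨_, freeProdHom_gen_three _ _ _ _⟩
  have hle : Subgroup.closure {ModularGroup.S, ModularGroup.T} ≤
      freeProdAct.range.comap actHom := by
    rw [Subgroup.closure_le]
    rintro x (rfl | rfl)
    · exact hS
    · rw [map_mul] at hST
      exact (Subgroup.mul_mem_cancel_left _ hS).1 hST
  rw [SpecialLinearGroup.SL2Z_generators] at hle
  exact hle (Subgroup.mem_top g)

/-- Elements `s`, `t` of a group with `s² = (st)³ = 1` define a homomorphism from `SL(2, ℤ)`. -/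
lemma exists_hom_of_relations {G : Type*} [Group G] (s t : G) (hs : s ^ 2 = 1)
    (hst : (s * t) ^ 3 = 1) :
    ∃ ρ : SL(2, ℤ) →* G, ρ ModularGroup.S = s ∧ ρ ModularGroup.T = t := by
  let e := MonoidHom.ofInjective freeProdAct_injective
  let ρ : SL(2, ℤ) →* G := (freeProdHom s (s * t) hs hst).comp
    (e.symm.toMonoidHom.comp (actHom.codRestrict freeProdAct.range actHom_mem_range))
  have key : ∀ g x, freeProdAct x = actHom g → ρ g = freeProdHom s (s * t) hs hst x := by
    intro g x h
    change freeProdHom s (s * t) hs hst (e.symm ⟨actHom g, _⟩) = _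
    congr 1
    rw [MulEquiv.symm_apply_eq]
    exact Subtype.ext h.symm
  have hS : ρ ModularGroup.S = s :=
    (key _ _ (freeProdHom_gen_two _ _ _ _)).trans (freeProdHom_gen_two _ _ _ _)
  have hST : ρ (ModularGroup.S * ModularGroup.T) = s * t :=
    (key _ _ (freeProdHom_gen_three _ _ _ _)).trans (freeProdHom_gen_three _ _ _ _)
  rw [map_mul, hS] at hST
  exact ⟨ρ, hS, mul_left_cancel hST⟩

lemma sqrt_two_inv_sq : (((Real.sqrt 2)⁻¹ : ℝ) : ℂ) ^ 2 = 1 / 2 := by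
  rw [← Complex.ofReal_pow, inv_pow, Real.sq_sqrt (by norm_num)]
  norm_num

lemma calS_sq : calS ^ 2 = 1 := by
  have h := sqrt_two_inv_sq
  rw [calS, smul_pow, h]
  ext i j
  fin_cases i <;> fin_cases j <;> norm_num [pow_two]

lemma calT_eq : calT = Complex.exp (-(Real.pi / 12) * Complex.I) • !![1, 0; 0, Complex.I] := by
  have h1 : Complex.exp (2 * Real.pi * Complex.I * (23 / 24)) =
      Complex.exp (-(Real.pi / 12) * Complex.I) := by
    rw [← Complex.exp_periodic (-(Real.pi / 12) * Complex.I)]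
    congr 1
    ring
  have h2 : Complex.exp (2 * Real.pi * Complex.I * (5 / 24)) =
      Complex.exp (-(Real.pi / 12) * Complex.I) * Complex.I := by
    nth_rewrite 3 [← Complex.exp_pi_div_two_mul_I]
    rw [← Complex.exp_add]
    congr 1
    ring
  rw [calT, h1, h2]
  ext i j
  fin_cases i <;> fin_cases j <;> simp

lemma exp_cube : Complex.exp (-(Real.pi / 12) * Complex.I) ^ 3 =
    (((Real.sqrt 2)⁻¹ : ℝ) : ℂ) * (1 - Complex.I) := by
  have h : (((Real.sqrt 2)⁻¹ : ℝ)) = Real.sqrt 2 / 2 := by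
    rw [inv_eq_one_div, div_eq_div_iff (by positivity) (by norm_num)]
    norm_num
  have e : ((3 : ℕ) : ℂ) * (-(Real.pi / 12) * Complex.I) =
      ((-(Real.pi / 4) : ℝ) : ℂ) * Complex.I := by
    push_cast; ring
  rw [← Complex.exp_nat_mul, e, Complex.exp_mul_I, ← Complex.ofReal_cos, ← Complex.ofReal_sin,
    Real.cos_neg, Real.sin_neg, Real.cos_pi_div_four, Real.sin_pi_div_four, h]
  push_cast
  ring

lemma calS_mul_calT_cube : (calS * calT) ^ 3 = 1 := by
  have h := sqrt_two_inv_sq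
  have hM : (!![1, 1; 1, -1] * !![1, 0; 0, Complex.I]) ^ 3 =
      (2 * (1 + Complex.I)) • (1 : Matrix (Fin 2) (Fin 2) ℂ) := by
    have hI := Complex.I_sq
    ext i j
    fin_cases i <;> fin_cases j <;> simp [pow_succ] <;> ring_nf <;> simp [hI] <;> ring
  rw [calT_eq, calS, smul_mul_smul_comm, smul_pow, hM, smul_smul, mul_pow, exp_cube]
  have : (((Real.sqrt 2)⁻¹ : ℝ) : ℂ) ^ 3 * ((((Real.sqrt 2)⁻¹ : ℝ) : ℂ) * (1 - Complex.I)) *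
      (2 * (1 + Complex.I)) = 1 := by
    generalize (((Real.sqrt 2)⁻¹ : ℝ) : ℂ) = r at h
    linear_combination (2 * r ^ 2 * (1 - Complex.I ^ 2) + 1 - Complex.I ^ 2) * h
      - (1 / 2) * Complex.I_sq
  rw [this, one_smul]

/-- The assignments `S ↦ 𝒮`, `T ↦ 𝒯` extend to a homomorphism `SL(2,ℤ) → GL₂(ℂ)`:
the defining relations `𝒮⁴ = 1` and `(𝒮𝒯)³ = 𝒮²` hold. -/
theorem stmt_3 :
    calS ^ 4 = 1 ∧ (calS * calT) ^ 3 = calS ^ 2 ∧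
    ∃ ρ : SL(2, ℤ) →* Matrix (Fin 2) (Fin 2) ℂ, ρ SmatZ = calS ∧ ρ TmatZ = calT := by
  refine ⟨by rw [show 4 = 2 * 2 from rfl, pow_mul, calS_sq, one_pow],
    by rw [calS_mul_calT_cube, calS_sq], ?_⟩
  let s : (Matrix (Fin 2) (Fin 2) ℂ)ˣ := Units.ofPowEqOne calS 2 calS_sq two_ne_zero
  let u : (Matrix (Fin 2) (Fin 2) ℂ)ˣ :=
    Units.ofPowEqOne (calS * calT) 3 calS_mul_calT_cube three_ne_zero
  obtain ⟨ρ, hS, hT⟩ := exists_hom_of_relations s (s * u) (Units.ext calS_sq) (by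
    rw [← mul_assoc, ← pow_two, show s ^ 2 = 1 from Units.ext calS_sq, one_mul]
    exact Units.ext calS_mul_calT_cube)
  refine ⟨(Units.coeHom _).comp ρ, congrArg Units.val hS, (congrArg Units.val hT).trans ?_⟩
  change calS * (calS * calT) = calT
  rw [← mul_assoc, ← pow_two, calS_sq, one_mul]
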